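/- Let (Z,d,ν) be a metric measure space with ν a doubling measure with constant C_ν, and let Z₀ ⊂ Z be a compact set satisfying the following corkscrew condition with constant 0<c≤1: for every z ∈ Z₀ and every 0 < R < diam(Z₀) there exists z' ∈ B(z,R) with B(z',cR) ⊂ B(z,R) ∩ Z₀. Let F ⊂ Z₀ be a closed set, let t ≥ 0, and suppose there is a constant C ≥ 1 such that ν(B(z,R) ∩ F_r) ≤ C (r/R)^t ν(B(z,R)) for all z ∈ F and 0 < r ≤ R < diam(Z). Then there exists a constant C' ≥ 1, depending only on C, c and C_ν, such that ν(B(z,R) ∩ F_r ∩ Z₀) ≤ C' (r/R)^t ν(B(z,R) ∩ Z₀) for all z ∈ F and 0 < r ≤ R < diam(Z₀). -/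

import Mathlib

open MeasureTheory Metric Set ENNReal

/-- `ν` is a doubling measure with doubling constant `Cν`:
`0 < ν(B(x,2r)) ≤ Cν · ν(B(x,r)) < ∞` for all `x` and `r > 0`. -/
def IsDoublingWith {Z : Type*} [PseudoMetricSpace Z] [MeasurableSpace Z]
    (ν : Measure Z) (Cν : ℝ) : Prop :=
  ∀ (x : Z) (r : ℝ), 0 < r →
    0 < ν (ball x (2 * r)) ∧
    ν (ball x (2 * r)) ≤ ENNReal.ofReal Cν * ν (ball x r) ∧
    ν (ball x r) < ⊤

/-!
At every point `z` of `F` and every scale `R < diam Z₀`, the corkscrew condition places a ball of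
radius `c R` inside `B(z, R) ∩ Z₀`. Doubling it about `log₂ (2 / c)` times covers `B(z, R)`, so
`ν (B(z, R) ∩ Z₀)` is comparable to `ν (B(z, R))`. Hence bounding the left-hand side of the
restricted estimate by that of the ambient one costs only a constant factor.
-/

section Definitions

variable {Z : Type*} [PseudoMetricSpace Z]

/-- The interior corkscrew condition for `A` with constant `c`: inside every ball centred on `A`
of radius `R < diam A`, the set `A` contains a ball of radius `c * R`. -/
def IsCorkscrewWith (A : Set Z) (c : ℝ) : Prop :=
  ∀ z ∈ A, ∀ R : ℝ, 0 < R → ENNReal.ofReal R < ediam A →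
    ∃ z' ∈ ball z R, ball z' (c * R) ⊆ ball z R ∩ A

/-- The lower codimension estimate for `F` relative to `A`, with exponent `t` and constant `C`:
`ν (B(z, R) ∩ F_r ∩ A) ≤ C (r / R)^t ν (B(z, R) ∩ A)` for `z ∈ F` and `0 < r ≤ R < diam A`.
The set `A` is kept explicit instead of passing to `ν.restrict A`, since `A` and the balls need
not be measurable. -/
def HasCodimensionBoundOn [MeasurableSpace Z] (ν : Measure Z) (A F : Set Z) (C t : ℝ) : Prop :=
  ∀ z ∈ F, ∀ r R : ℝ, 0 < r → r ≤ R → ENNReal.ofReal R < ediam A →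
    ν (ball z R ∩ thickening r F ∩ A) ≤ ENNReal.ofReal (C * (r / R) ^ t) * ν (ball z R ∩ A)

end Definitions

variable {Z : Type*} [PseudoMetricSpace Z] [MeasurableSpace Z] {ν : Measure Z} {C c Cν t : ℝ}
  {A F : Set Z}

theorem hasCodimensionBoundOn_univ_iff :
    HasCodimensionBoundOn ν univ F C t ↔
      ∀ z ∈ F, ∀ r R : ℝ, 0 < r → r ≤ R → ENNReal.ofReal R < ediam (univ : Set Z) →
        ν (ball z R ∩ thickening r F) ≤ ENNReal.ofReal (C * (r / R) ^ t) * ν (ball z R) := by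
  simp only [HasCodimensionBoundOn, inter_univ]

namespace IsDoublingWith

theorem constant_pos (hν : IsDoublingWith ν Cν) (x : Z) : 0 < Cν := by
  obtain ⟨hpos, hle, -⟩ := hν x 1 one_pos
  exact ENNReal.ofReal_pos.1 (ENNReal.mul_pos_iff.1 (hpos.trans_le hle)).1

theorem measure_ball_two_pow_mul_le (hν : IsDoublingWith ν Cν) (x : Z) {r : ℝ} (hr : 0 < r)
    (n : ℕ) : ν (ball x (2 ^ n * r)) ≤ ENNReal.ofReal Cν ^ n * ν (ball x r) := by
  induction n with
  | zero => simp
  | succ n ih =>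
    calc ν (ball x (2 ^ (n + 1) * r))
        = ν (ball x (2 * (2 ^ n * r))) := by rw [pow_succ', mul_assoc]
      _ ≤ ENNReal.ofReal Cν * ν (ball x (2 ^ n * r)) := (hν x _ (by positivity)).2.1
      _ ≤ ENNReal.ofReal Cν * (ENNReal.ofReal Cν ^ n * ν (ball x r)) := by gcongr
      _ = ENNReal.ofReal Cν ^ (n + 1) * ν (ball x r) := by rw [pow_succ', mul_assoc]

theorem measure_ball_mul_le (hν : IsDoublingWith ν Cν) (x : Z) {r K : ℝ} (hr : 0 < r)
    (hK : 0 < K) :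
    ν (ball x (K * r)) ≤ ENNReal.ofReal Cν ^ ⌈Real.logb 2 K⌉₊ * ν (ball x r) := by
  have hK_le : K ≤ 2 ^ ⌈Real.logb 2 K⌉₊ := by
    rw [← Real.rpow_natCast, ← Real.logb_le_iff_le_rpow one_lt_two hK]
    exact Nat.le_ceil _
  calc ν (ball x (K * r))
      ≤ ν (ball x (2 ^ ⌈Real.logb 2 K⌉₊ * r)) := by gcongr
    _ ≤ ENNReal.ofReal Cν ^ ⌈Real.logb 2 K⌉₊ * ν (ball x r) :=
      hν.measure_ball_two_pow_mul_le x hr _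

end IsDoublingWith

theorem IsCorkscrewWith.measure_ball_le (hA : IsCorkscrewWith A c) (hν : IsDoublingWith ν Cν)
    (hc : 0 < c) {z : Z} (hz : z ∈ A) {R : ℝ} (hR : 0 < R) (hRA : ENNReal.ofReal R < ediam A) :
    ν (ball z R) ≤ ENNReal.ofReal Cν ^ ⌈Real.logb 2 (2 / c)⌉₊ * ν (ball z R ∩ A) := by
  obtain ⟨z', hz', hsub⟩ := hA z hz R hR hRA
  have hcover : ball z R ⊆ ball z' (2 / c * (c * R)) := by
    rw [← mul_assoc, div_mul_cancel₀ _ hc.ne', two_mul]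
    exact ball_subset_ball' (by gcongr; exact (mem_ball'.1 hz').le)
  calc ν (ball z R)
      ≤ ν (ball z' (2 / c * (c * R))) := measure_mono hcover
    _ ≤ ENNReal.ofReal Cν ^ ⌈Real.logb 2 (2 / c)⌉₊ * ν (ball z' (c * R)) :=
      hν.measure_ball_mul_le z' (by positivity) (by positivity)
    _ ≤ ENNReal.ofReal Cν ^ ⌈Real.logb 2 (2 / c)⌉₊ * ν (ball z R ∩ A) := by gcongr

theorem restricted_codimension_estimate_general (hν : IsDoublingWith ν Cν) (hc : 0 < c)
    (hA : IsCorkscrewWith A c) (hFA : F ⊆ A) (hF : HasCodimensionBoundOn ν univ F C t) :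
    HasCodimensionBoundOn ν A F (C * Cν ^ ⌈Real.logb 2 (2 / c)⌉₊) t := by
  intro z hz r R hr hrR hRA
  have hCν : 0 ≤ Cν := (hν.constant_pos z).le
  calc ν (ball z R ∩ thickening r F ∩ A)
      ≤ ν (ball z R ∩ thickening r F) := measure_mono inter_subset_left
    _ ≤ ENNReal.ofReal (C * (r / R) ^ t) * ν (ball z R) :=
      hasCodimensionBoundOn_univ_iff.1 hF z hz r R hr hrR
        (hRA.trans_le (ediam_mono (subset_univ A)))
    _ ≤ ENNReal.ofReal (C * (r / R) ^ t) *
          (ENNReal.ofReal Cν ^ ⌈Real.logb 2 (2 / c)⌉₊ * ν (ball z R ∩ A)) := by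
      gcongr
      exact hA.measure_ball_le hν hc (hFA hz) (hr.trans_le hrR) hRA
    _ = ENNReal.ofReal (C * Cν ^ ⌈Real.logb 2 (2 / c)⌉₊ * (r / R) ^ t) * ν (ball z R ∩ A) := by
      rw [← ENNReal.ofReal_pow hCν, ← mul_assoc, ← ENNReal.ofReal_mul' (by positivity),
        mul_right_comm]

/-- Restriction of a lower Assouad codimension-type estimate to a compact corkscrew
subset: if `Z₀` is compact satisfying a corkscrew condition with constant `c`, `F ⊆ Z₀`
is closed, `t ≥ 0`, and `ν(B(z,R) ∩ F_r) ≤ C (r/R)^t ν(B(z,R))` for all `z ∈ F` and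
`0 < r ≤ R < diam Z`, then there is `C' ≥ 1`, depending only on `C`, `c` and `Cν`, with
`ν(B(z,R) ∩ F_r ∩ Z₀) ≤ C' (r/R)^t ν(B(z,R) ∩ Z₀)` for all `z ∈ F` and
`0 < r ≤ R < diam Z₀`. -/
theorem restricted_codimension_estimate :
    ∃ C' : ℝ → ℝ → ℝ → ℝ,
      ∀ C c Cν : ℝ, 1 ≤ C → 0 < c → c ≤ 1 → 1 ≤ Cν →
        1 ≤ C' C c Cν ∧
        ∀ (Z : Type) [MetricSpace Z] [MeasurableSpace Z] (ν : Measure Z),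
          IsDoublingWith ν Cν →
          ∀ Z₀ : Set Z, IsCompact Z₀ →
            (∀ z ∈ Z₀, ∀ R : ℝ, 0 < R → ENNReal.ofReal R < EMetric.diam Z₀ →
              ∃ z' ∈ ball z R, ball z' (c * R) ⊆ ball z R ∩ Z₀) →
          ∀ F : Set Z, IsClosed F → F ⊆ Z₀ →
          ∀ t : ℝ, 0 ≤ t →
            (∀ z ∈ F, ∀ r R : ℝ, 0 < r → r ≤ R →
              ENNReal.ofReal R < EMetric.diam (Set.univ : Set Z) →
              ν (ball z R ∩ Metric.thickening r F) ≤
                ENNReal.ofReal (C * (r / R) ^ t) * ν (ball z R)) →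
            ∀ z ∈ F, ∀ r R : ℝ, 0 < r → r ≤ R →
              ENNReal.ofReal R < EMetric.diam Z₀ →
              ν (ball z R ∩ Metric.thickening r F ∩ Z₀) ≤
                ENNReal.ofReal (C' C c Cν * (r / R) ^ t) * ν (ball z R ∩ Z₀) :=
  ⟨fun C c Cν => C * Cν ^ ⌈Real.logb 2 (2 / c)⌉₊, fun _ _ _ hC hc _ hCν =>
    ⟨one_le_mul_of_one_le_of_one_le hC (one_le_pow₀ hCν),
      fun _ _ _ _ hν _ _ hZ₀ _ _ hFZ _ _ hF =>
        restricted_codimension_estimate_general hν hc hZ₀ hFZ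
          (hasCodimensionBoundOn_univ_iff.2 hF)⟩⟩
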